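/- There exists an absolute constant C > 0 with the following property. Let ν ≥ 1 be a real number and let π_ν(i) = e^{−ν}·ν^i/i! denote the Poisson probability mass function with parameter ν on the natural numbers. Then for every subset E ⊆ ℕ, ∑_{i ∈ E} i·π_ν(i) ≤ max{1/ν, C·ν³·∑_{i ∈ E} π_ν(i)}. (Equivalently, for a Poisson(ν) random variable X and any event ℰ, E[X | ℰ]·Pr[ℰ] ≤ max{1/ν, C·ν³·Pr[ℰ]}.) -/

import Mathlib

/-- The Poisson probability mass function with parameter `ν`. -/
noncomputable def poissonPMF (ν : ℝ) (i : ℕ) : ℝ :=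
  Real.exp (-ν) * ν ^ i / (Nat.factorial i)

/-!
Let `X` be a Poisson(ν) variable and write `S` for the sum of `i * π_ν(i)` over `E`. Cauchy–Schwarz
gives `S ^ 2 ≤ 𝔼[X ^ 2] * Pr[E] = ν * (ν + 1) * Pr[E]`, so that either `S ≤ 1 / ν`, or
`S / ν ≤ S ^ 2` and hence `S ≤ ν ^ 2 * (ν + 1) * Pr[E]`.
-/

theorem le_max_div_of_sq_le {K : Type*} [Field K] [LinearOrder K] [IsStrictOrderedRing K]
    {x b c : K} (hb : 0 < b) (h : x ^ 2 ≤ c) : x ≤ max b (c / b) := by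
  rcases le_total x b with hxb | hbx
  · exact le_max_of_le_left hxb
  · refine le_max_of_le_right ((le_div_iff₀ hb).2 ?_)
    calc x * b ≤ x * x := mul_le_mul_of_nonneg_left hbx (hb.le.trans hbx)
      _ = x ^ 2 := (sq x).symm
      _ ≤ c := h

theorem tsum_sq_le_tsum_mul_tsum_of_sq_le_mul {ι : Type*} {r f g : ι → ℝ}
    (hf : Summable f) (hg : Summable g) (hf₀ : ∀ i, 0 ≤ f i) (hg₀ : ∀ i, 0 ≤ g i)
    (h : ∀ i, r i ^ 2 ≤ f i * g i) : (∑' i, r i) ^ 2 ≤ (∑' i, f i) * ∑' i, g i := by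
  have hr : Summable r := (hf.add hg).of_norm_bounded fun i =>
    abs_le_of_sq_le_sq
      (by linarith [h i, mul_nonneg (hf₀ i) (hg₀ i), sq_nonneg (f i), sq_nonneg (g i),
        add_sq (f i) (g i)])
      (add_nonneg (hf₀ i) (hg₀ i))
  exact le_of_tendsto_of_tendsto' (hr.hasSum.pow 2) (Filter.Tendsto.mul hf.hasSum hg.hasSum)
    fun s => s.sum_sq_le_sum_mul_sum_of_sq_le_mul (fun i _ => hf₀ i) (fun i _ => hg₀ i)
      fun i _ => h i

theorem poissonPMF_nonneg {ν : ℝ} (hν : 0 ≤ ν) (i : ℕ) : 0 ≤ poissonPMF ν i := by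
  unfold poissonPMF
  positivity

theorem hasSum_poissonPMF (ν : ℝ) : HasSum (poissonPMF ν) 1 := by
  have h := (NormedSpace.expSeries_div_hasSum_exp ν).mul_left (Real.exp (-ν))
  rw [← Real.exp_eq_exp_ℝ, ← Real.exp_add, neg_add_cancel, Real.exp_zero] at h
  exact h.congr_fun fun i => mul_div_assoc _ _ _

theorem descFactorial_mul_poissonPMF_add (ν : ℝ) (i k : ℕ) :
    ((i + k).descFactorial k : ℝ) * poissonPMF ν (i + k) = ν ^ k * poissonPMF ν i := by
  have hfac : (i.factorial : ℝ) * (i + k).descFactorial k = (i + k).factorial := by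
    have h := Nat.factorial_mul_descFactorial (Nat.le_add_left k i)
    rw [Nat.add_sub_cancel] at h
    exact_mod_cast h
  unfold poissonPMF
  field_simp
  rw [← hfac]
  ring

theorem hasSum_descFactorial_mul_poissonPMF (ν : ℝ) (k : ℕ) :
    HasSum (fun i : ℕ => (i.descFactorial k : ℝ) * poissonPMF ν i) (ν ^ k) := by
  have hinit : ∑ i ∈ Finset.range k, (i.descFactorial k : ℝ) * poissonPMF ν i = 0 :=
    Finset.sum_eq_zero fun i hi => by
      rw [Nat.descFactorial_of_lt (Finset.mem_range.1 hi), Nat.cast_zero, zero_mul]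
  rw [← hasSum_nat_add_iff' k, hinit, sub_zero]
  simpa only [descFactorial_mul_poissonPMF_add, mul_one]
    using (hasSum_poissonPMF ν).mul_left (ν ^ k)

theorem hasSum_id_mul_poissonPMF (ν : ℝ) : HasSum (fun i : ℕ => (i : ℝ) * poissonPMF ν i) ν := by
  simpa only [Nat.descFactorial_one, pow_one] using hasSum_descFactorial_mul_poissonPMF ν 1

theorem hasSum_sq_mul_poissonPMF (ν : ℝ) :
    HasSum (fun i : ℕ => (i : ℝ) ^ 2 * poissonPMF ν i) (ν * (ν + 1)) := by
  convert (hasSum_descFactorial_mul_poissonPMF ν 2).add (hasSum_id_mul_poissonPMF ν) using 1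
  · funext i
    rw [Nat.cast_descFactorial_two]
    ring
  · ring

theorem sq_tsum_id_mul_poissonPMF_le {ν : ℝ} (hν : 0 ≤ ν) (E : Set ℕ) :
    (∑' i : E, ((i : ℕ) : ℝ) * poissonPMF ν i) ^ 2 ≤ ν * (ν + 1) * ∑' i : E, poissonPMF ν i := by
  have hp : ∀ i, 0 ≤ poissonPMF ν i := poissonPMF_nonneg hν
  have hsq : ∀ i : ℕ, 0 ≤ (i : ℝ) ^ 2 * poissonPMF ν i := fun i => mul_nonneg (sq_nonneg _) (hp i)
  have hsum_sq := hasSum_sq_mul_poissonPMF ν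
  calc (∑' i : E, ((i : ℕ) : ℝ) * poissonPMF ν i) ^ 2
      ≤ (∑' i : E, ((i : ℕ) : ℝ) ^ 2 * poissonPMF ν i) * ∑' i : E, poissonPMF ν i :=
        tsum_sq_le_tsum_mul_tsum_of_sq_le_mul (hsum_sq.summable.subtype E)
          ((hasSum_poissonPMF ν).summable.subtype E) (fun i => hsq i) (fun i => hp i)
          fun i => le_of_eq (by ring)
    _ ≤ (∑' i : ℕ, (i : ℝ) ^ 2 * poissonPMF ν i) * ∑' i : E, poissonPMF ν i :=
        mul_le_mul_of_nonneg_right (hsum_sq.summable.tsum_subtype_le _ E hsq)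
          (tsum_nonneg fun i => hp i)
    _ = ν * (ν + 1) * ∑' i : E, poissonPMF ν i := by rw [hsum_sq.tsum_eq]

theorem poisson_conditional_expectation_bound_general {ν : ℝ} (hν : 0 < ν) (E : Set ℕ) :
    ∑' i : E, ((i : ℕ) : ℝ) * poissonPMF ν i
      ≤ max (1 / ν) (ν ^ 2 * (ν + 1) * ∑' i : E, poissonPMF ν i) := by
  have hquot : ν * (ν + 1) * (∑' i : E, poissonPMF ν i) / (1 / ν)
      = ν ^ 2 * (ν + 1) * ∑' i : E, poissonPMF ν i := by
    rw [one_div, div_inv_eq_mul]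
    ring
  rw [← hquot]
  exact le_max_div_of_sq_le (one_div_pos.2 hν) (sq_tsum_id_mul_poissonPMF_le hν.le E)

/-- there is an absolute constant `C > 0` such that for every `ν ≥ 1`
and every event `E ⊆ ℕ`, a Poisson(ν) variable `X` satisfies
`E[X·1_E] ≤ max{1/ν, C·ν³·Pr[E]}`. -/
theorem poisson_conditional_expectation_bound :
    ∃ C : ℝ, 0 < C ∧ ∀ ν : ℝ, 1 ≤ ν → ∀ E : Set ℕ,
      ∑' i : E, ((i : ℕ) : ℝ) * poissonPMF ν i
        ≤ max (1 / ν) (C * ν ^ 3 * ∑' i : E, poissonPMF ν i) := by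
  refine ⟨2, two_pos, fun ν hν E =>
    (poisson_conditional_expectation_bound_general (zero_lt_one.trans_le hν) E).trans ?_⟩
  have hprob : 0 ≤ ∑' i : E, poissonPMF ν i :=
    tsum_nonneg fun i => poissonPMF_nonneg (zero_le_one.trans hν) i
  have hcoeff : ν ^ 2 * (ν + 1) ≤ 2 * ν ^ 3 := by nlinarith [sq_nonneg ν]
  exact max_le_max_left _ (mul_le_mul_of_nonneg_right hcoeff hprob)
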